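/- Let S, F and B be finite sets, let k, l ≥ 1, let b ∈ B, let u_1,…,u_l : B → F and v_1,…,v_l : S → F, let g_1,…,g_k : S → F, and let w_1,…,w_k ∈ F. Let S_b = {z ∈ S : v_j(z) = u_j(b) for all j ∈ {1,…,l}}. Then the following are equivalent: (1) for every z ∈ S, if v_j(z) = u_j(b) for all j ∈ {1,…,l}, then there exists i ∈ {1,…,k} with g_i(z) = w_i; (2) there exists a minimal sample (P,(c_i)_{i∈P}) of (g_1,…,g_k) (restricted to S_b) over S_b such that w_i = c_i for every i ∈ P. -/

import Mathlib

/-- `(P, c)` is a sample of the `k`-tuple of functions `g` over the subset `A`: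
`A = ⋃_{i ∈ P} (g_i⁻¹(c_i) ∩ A)`, i.e. every element of `A` is covered. -/
def IsSampleOn {S F : Type*} {k : ℕ} (A : Set S) (g : Fin k → S → F)
    (P : Finset (Fin k)) (c : Fin k → F) : Prop :=
  ∀ z ∈ A, ∃ i ∈ P, g i z = c i

/-- A sample over `A` is minimal if dropping any index `j ∈ P` breaks the covering. -/
def IsMinimalSampleOn {S F : Type*} {k : ℕ} (A : Set S) (g : Fin k → S → F)
    (P : Finset (Fin k)) (c : Fin k → F) : Prop :=
  IsSampleOn A g P c ∧ ∀ j ∈ P, ∃ z ∈ A, ∀ i ∈ P.erase j, g i z ≠ c i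

section

variable {S F : Type*} {k : ℕ} {A : Set S} {g : Fin k → S → F} {P Q : Finset (Fin k)}
  {c w : Fin k → F}

theorem IsSampleOn.mono (h : IsSampleOn A g P c) (hPQ : P ⊆ Q) : IsSampleOn A g Q c := by
  intro z hz
  obtain ⟨i, hi, hgi⟩ := h z hz
  exact ⟨i, hPQ hi, hgi⟩

theorem IsSampleOn.congr (h : IsSampleOn A g P c) (hwc : ∀ i ∈ P, w i = c i) :
    IsSampleOn A g P w := by
  intro z hz
  obtain ⟨i, hi, hgi⟩ := h z hz
  exact ⟨i, hi, hgi.trans (hwc i hi).symm⟩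

theorem isSampleOn_univ_iff :
    IsSampleOn A g Finset.univ w ↔ ∀ z ∈ A, ∃ i, g i z = w i := by
  simp only [IsSampleOn, Finset.mem_univ, true_and]

theorem isMinimalSampleOn_iff_minimal :
    IsMinimalSampleOn A g P c ↔ Minimal (fun Q => IsSampleOn A g Q c) P := by
  rw [Finset.minimal_iff_forall_erase fun _ _ h hsub => h.mono hsub]
  simp only [IsMinimalSampleOn, IsSampleOn, not_forall, not_exists, not_and, exists_prop, ne_eq]

theorem IsSampleOn.exists_isMinimalSampleOn (h : IsSampleOn A g P c) :
    ∃ Q ⊆ P, IsMinimalSampleOn A g Q c := by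
  simp only [isMinimalSampleOn_iff_minimal]
  exact exists_minimal_le_of_wellFoundedLT _ P h

end

theorem stmt_6_general {S F : Type*} {k : ℕ} (A : Set S) (g : Fin k → S → F) (w : Fin k → F) :
    (∀ z ∈ A, ∃ i, g i z = w i) ↔
      ∃ (P : Finset (Fin k)) (c : Fin k → F),
        IsMinimalSampleOn A g P c ∧ ∀ i ∈ P, w i = c i := by
  rw [← isSampleOn_univ_iff]
  constructor
  · intro hsample
    obtain ⟨P, -, hP⟩ := hsample.exists_isMinimalSampleOn
    exact ⟨P, w, hP, fun _ _ => rfl⟩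
  · rintro ⟨P, c, ⟨hsample, -⟩, hwc⟩
    exact (hsample.congr hwc).mono P.subset_univ

theorem stmt_6 {S F B : Type*} [Fintype S] [Fintype F] [Fintype B]
    {k l : ℕ} (hk : 1 ≤ k) (hl : 1 ≤ l) (b : B)
    (u : Fin l → B → F) (v : Fin l → S → F)
    (g : Fin k → S → F) (w : Fin k → F) :
    (∀ z : S, (∀ j : Fin l, v j z = u j b) → ∃ i : Fin k, g i z = w i) ↔
      ∃ (P : Finset (Fin k)) (c : Fin k → F),
        IsMinimalSampleOn {z : S | ∀ j : Fin l, v j z = u j b} g P c ∧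
          ∀ i ∈ P, w i = c i :=
  stmt_6_general _ g w
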